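/- Let k ≥ 2 be an integer and τ > 2 a real number with τ ≠ 2 + 4/(k − 1), let Q(a) = 2·a^k + (2 − τ)·(a^{k−1} + a^{k−2} + ⋯ + a) + 2, and let a_c > 0 be the unique positive root of Q′. If Q(a_c) < 0, then the equation 2·a^{k+1} − τ·a^k + τ·a − 2 = 0 has exactly three roots in (0, ∞); if Q(a_c) = 0, it has exactly two roots in (0, ∞); and if Q(a_c) > 0, its only root in (0, ∞) is a = 1. -/

import Mathlib

open scoped BigOperators

/-!
The equation is `(a - 1) * Q a = 0`, and `Q 1 ≠ 0`, so the root `a = 1` comes in addition to the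
positive zeros of `Q`. Now `Q` starts from `Q 0 = 2` with slope `2 - τ < 0` and tends to `+∞`. By
Darboux's theorem `Q'`, whose only positive zero is `ac`, keeps a constant sign on `[0, ac)` and on
`(ac, ∞)`; the slope at `0` and the growth at infinity make these signs negative and positive. So
`Q` is a valley with bottom `ac`, and the sign of `Q ac` decides how often it vanishes.
-/

open Set Filter Asymptotics

/-- A valley on `[l, ∞)` with bottom `c`: a function that strictly decreases from `l` to `c` and
strictly increases from `c` on. It serves to count the solutions of `f x = v` by comparing `v` with
the bottom value `f c`. -/
structure IsValley {α β : Type*} [Preorder α] [Preorder β] (f : α → β) (l c : α) : Prop where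
  strictAntiOn : StrictAntiOn f (Icc l c)
  strictMonoOn : StrictMonoOn f (Ici c)

namespace IsValley

variable {α β : Type*} {l c x : α} {v : β}

theorem apply_bottom_lt [LinearOrder α] [Preorder β] {f : α → β} (hf : IsValley f l c)
    (hx : l ≤ x) (hne : x ≠ c) : f c < f x := by
  rcases hne.lt_or_gt with hxc | hcx
  · exact hf.strictAntiOn ⟨hx, hxc.le⟩ ⟨hx.trans hxc.le, le_rfl⟩ hxc
  · exact hf.strictMonoOn self_mem_Ici hcx.le hcx

theorem levelSet_eq_empty [LinearOrder α] [Preorder β] {f : α → β} (hf : IsValley f l c)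
    (hv : v < f c) : {x | l < x ∧ f x = v} = ∅ := by
  refine eq_empty_of_forall_notMem fun x ⟨hx, hxv⟩ ↦ ?_
  rcases eq_or_ne x c with rfl | hne
  · exact hv.ne' hxv
  · exact (hv.trans (hf.apply_bottom_lt hx.le hne)).ne' hxv

theorem levelSet_eq_singleton [LinearOrder α] [Preorder β] {f : α → β} (hf : IsValley f l c)
    (hlc : l < c) (hv : f c = v) : {x | l < x ∧ f x = v} = {c} := by
  refine eq_singleton_iff_unique_mem.2 ⟨⟨hlc, hv⟩, fun x ⟨hx, hxv⟩ ↦ ?_⟩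
  by_contra hne
  exact (hf.apply_bottom_lt hx.le hne).ne (hv.trans hxv.symm)

theorem encard_levelSet_eq_two [ConditionallyCompleteLinearOrder α] [DenselyOrdered α]
    [TopologicalSpace α] [OrderTopology α] [LinearOrder β] [TopologicalSpace β]
    [OrderClosedTopology β] {f : α → β} (hf : IsValley f l c) (hcont : ContinuousOn f (Ici l))
    (hlc : l ≤ c) (hc : f c < v) (hl : v < f l) (hr : ∃ r, c ≤ r ∧ v < f r) :
    {x | l < x ∧ f x = v}.encard = 2 := by
  obtain ⟨r, hcr, hr⟩ := hr
  obtain ⟨x, ⟨hlx, hxc⟩, hx⟩ :=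
    intermediate_value_Ioo' hlc (hcont.mono Icc_subset_Ici_self) ⟨hc, hl⟩
  obtain ⟨y, ⟨hcy, -⟩, hy⟩ := intermediate_value_Ioo hcr
    (hcont.mono (Icc_subset_Ici_self.trans (Ici_subset_Ici.2 hlc))) ⟨hc, hr⟩
  refine encard_eq_two.2 ⟨x, y, (hxc.trans hcy).ne, Subset.antisymm ?_ ?_⟩
  · rintro z ⟨hlz, hz⟩
    rcases le_total z c with hzc | hcz
    · exact .inl (hf.strictAntiOn.injOn ⟨hlz.le, hzc⟩ ⟨hlx.le, hxc.le⟩ (hz.trans hx.symm))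
    · exact .inr (hf.strictMonoOn.injOn hcz hcy.le (hz.trans hy.symm))
  · rintro z (rfl | rfl)
    exacts [⟨hlx, hx⟩, ⟨hlc.trans_lt hcy, hy⟩]

end IsValley

section CriticalPoint

variable {f f' : ℝ → ℝ} {l c : ℝ}

theorem strictAntiOn_Icc_of_hasDerivWithinAt_ne_zero (hcont : ContinuousOn f (Icc l c))
    (hf : ∀ x ∈ Ico l c, HasDerivWithinAt f (f' x) (Ico l c) x) (hl : f' l < 0)
    (hne : ∀ x ∈ Ioo l c, f' x ≠ 0) : StrictAntiOn f (Icc l c) := by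
  have hne' : ∀ x ∈ Ico l c, f' x ≠ 0 := fun x hx ↦
    hx.1.eq_or_lt.elim (fun h ↦ h ▸ hl.ne) fun h ↦ hne x ⟨h, hx.2⟩
  have hneg : ∀ x ∈ Ico l c, f' x < 0 := by
    intro x hx
    have hsign := hasDerivWithinAt_forall_lt_or_forall_gt_of_forall_ne (convex_Ico l c) hf hne'
    refine hsign.resolve_right (fun hpos ↦ ?_) x hx
    exact (hpos l (left_mem_Ico.2 (hx.1.trans_lt hx.2))).not_gt hl
  refine strictAntiOn_of_hasDerivWithinAt_neg (convex_Icc l c) hcont (f' := f') ?_ ?_ <;>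
    rw [interior_Icc]
  · exact fun x hx ↦ (hf x (Ioo_subset_Ico_self hx)).mono Ioo_subset_Ico_self
  · exact fun x hx ↦ hneg x (Ioo_subset_Ico_self hx)

theorem strictMonoOn_Ici_of_hasDerivWithinAt_ne_zero (hcont : ContinuousOn f (Ici c))
    (hf : ∀ x ∈ Ioi c, HasDerivWithinAt f (f' x) (Ioi c) x) (hne : ∀ x ∈ Ioi c, f' x ≠ 0)
    (htop : Tendsto f atTop atTop) : StrictMonoOn f (Ici c) := by
  rw [← interior_Ici] at hf
  have hsign := hasDerivWithinAt_forall_lt_or_forall_gt_of_forall_ne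
    (convex_Ici c).interior hf (by rwa [interior_Ici])
  refine strictMonoOn_of_hasDerivWithinAt_pos (convex_Ici c) hcont hf (hsign.resolve_left ?_)
  intro hneg
  have hanti := strictAntiOn_of_hasDerivWithinAt_neg (convex_Ici c) hcont hf hneg
  obtain ⟨x, hfx, hcx⟩ := ((htop.eventually_gt_atTop (f c)).and (eventually_gt_atTop c)).exists
  exact hfx.not_gt (hanti self_mem_Ici hcx.le hcx)

theorem IsValley.of_hasDerivWithinAt (hf : ∀ x ∈ Ici l, HasDerivWithinAt f (f' x) (Ici l) x)
    (hlc : l ≤ c) (hl : f' l < 0) (hcrit : ∀ x ∈ Ioi l, f' x = 0 → x = c)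
    (htop : Tendsto f atTop atTop) : IsValley f l c := by
  have hcont : ContinuousOn f (Ici l) := fun x hx ↦ (hf x hx).continuousWithinAt
  have hright : Ici c ⊆ Ici l := Ici_subset_Ici.2 hlc
  constructor
  · exact strictAntiOn_Icc_of_hasDerivWithinAt_ne_zero (hcont.mono Icc_subset_Ici_self)
      (fun x hx ↦ (hf x hx.1).mono Ico_subset_Ici_self) hl
      fun x hx h ↦ hx.2.ne (hcrit x hx.1 h)
  · exact strictMonoOn_Ici_of_hasDerivWithinAt_ne_zero (hcont.mono hright)
      (fun x hx ↦ (hf x (hright (Ioi_subset_Ici_self hx))).mono (Ioi_subset_Ici_self.trans hright))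
      (fun x hx h ↦ hx.ne' (hcrit x (hlc.trans_lt hx) h)) htop

end CriticalPoint

theorem isLittleO_sum_pow_pow_atTop {𝕜 : Type*} [NormedField 𝕜] [LinearOrder 𝕜]
    [IsStrictOrderedRing 𝕜] [OrderTopology 𝕜] {s : Finset ℕ} {k : ℕ} (hs : ∀ j ∈ s, j < k) :
    (fun a : 𝕜 ↦ ∑ j ∈ s, a ^ j) =o[atTop] fun a ↦ a ^ k :=
  .fun_sum fun j hj ↦ isLittleO_pow_pow_atTop_of_lt (hs j hj)

/-- The cofactor `Q` of `a - 1` in the diagonal equation `2a^(k+1) - τa^k + τa - 2 = 0`. The middle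
sum `a + ⋯ + a^(k-1)` is indexed by a half-open interval to avoid truncated subtraction. -/
def diagonalCofactor (k : ℕ) (τ a : ℝ) : ℝ :=
  2 * a ^ k + (2 - τ) * ∑ j ∈ Finset.Ico 1 k, a ^ j + 2

section DiagonalCofactor

variable {k : ℕ} {τ : ℝ}

theorem sub_one_mul_diagonalCofactor (hk : k ≠ 0) (a : ℝ) :
    (a - 1) * diagonalCofactor k τ a = 2 * a ^ (k + 1) - τ * a ^ k + τ * a - 2 := by
  rw [diagonalCofactor]
  linear_combination (2 - τ) * geom_sum_Ico_mul a (Nat.one_le_iff_ne_zero.2 hk)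

theorem diagonalCofactor_zero (hk : k ≠ 0) : diagonalCofactor k τ 0 = 2 := by
  have hsum : ∑ j ∈ Finset.Ico 1 k, (0 : ℝ) ^ j = 0 := Finset.sum_eq_zero fun j hj ↦
    zero_pow (Nat.one_le_iff_ne_zero.1 (Finset.mem_Ico.1 hj).1)
  simp [diagonalCofactor, hsum, hk]

theorem diagonalCofactor_one_eq_zero_iff (hk : 2 ≤ k) :
    diagonalCofactor k τ 1 = 0 ↔ τ = 2 + 4 / ((k : ℝ) - 1) := by
  have hk' : (k : ℝ) - 1 ≠ 0 := sub_ne_zero.2 (by exact_mod_cast (by lia : k ≠ 1))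
  have hone : diagonalCofactor k τ 1 = 4 - (τ - 2) * (k - 1) := by
    simp only [diagonalCofactor, one_pow, Finset.sum_const, Nat.card_Ico, nsmul_eq_mul,
      Nat.cast_sub (one_le_two.trans hk), Nat.cast_one]
    ring
  rw [hone, sub_eq_zero, ← div_eq_iff hk', eq_comm, sub_eq_iff_eq_add']

theorem hasDerivAt_diagonalCofactor_zero (hk : 2 ≤ k) :
    HasDerivAt (diagonalCofactor k τ) (2 - τ) 0 := by
  have hsum : HasDerivAt (fun a : ℝ ↦ ∑ j ∈ Finset.Ico 1 k, a ^ j) 1 0 := by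
    have hcoeff : ∑ j ∈ Finset.Ico 1 k, (j : ℝ) * 0 ^ (j - 1) = 1 := by
      rw [Finset.sum_eq_single_of_mem 1 (Finset.mem_Ico.2 ⟨le_rfl, hk⟩)]
      · simp
      · intro j hj hj1
        rw [zero_pow (by grind), mul_zero]
    exact hcoeff ▸ HasDerivAt.fun_sum fun j _ ↦ hasDerivAt_pow j (0 : ℝ)
  have hpow : HasDerivAt (fun a : ℝ ↦ a ^ k) 0 0 := by
    simpa [show k - 1 ≠ 0 by lia] using hasDerivAt_pow k (0 : ℝ)
  have hslope := ((hpow.const_mul 2).add (hsum.const_mul (2 - τ))).add_const 2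
  rwa [mul_zero, zero_add, mul_one] at hslope

theorem tendsto_diagonalCofactor_atTop (hk : k ≠ 0) :
    Tendsto (diagonalCofactor k τ) atTop atTop := by
  have hlead : Tendsto (fun a : ℝ ↦ 2 * a ^ k) atTop atTop :=
    (tendsto_pow_atTop hk).const_mul_atTop two_pos
  have hsum : (fun a : ℝ ↦ (2 - τ) * ∑ j ∈ Finset.Ico 1 k, a ^ j) =o[atTop] fun a ↦ 2 * a ^ k :=
    ((isLittleO_sum_pow_pow_atTop fun j hj ↦ (Finset.mem_Ico.1 hj).2).const_mul_left _).trans_isBigO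
      (isBigO_self_const_mul two_ne_zero _ _)
  exact ((IsEquivalent.refl.add_isLittleO hsum).symm.tendsto_atTop hlead).atTop_add
    tendsto_const_nhds

theorem setOf_diagonal_equation_eq_insert (hk : k ≠ 0) :
    {a : ℝ | 0 < a ∧ 2 * a ^ (k + 1) - τ * a ^ k + τ * a - 2 = 0} =
      insert 1 {a | 0 < a ∧ diagonalCofactor k τ a = 0} := by
  ext a
  simp only [← sub_one_mul_diagonalCofactor hk, mul_eq_zero, sub_eq_zero, mem_ofPred_eq,
    mem_insert_iff, and_or_left]
  grind

end DiagonalCofactor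

/-- For `τ > 2`, `τ ≠ 2 + 4/(k − 1)`, with
`Q(a) = 2 a^k + (2 − τ)(a^{k−1} + ⋯ + a) + 2`, `Q′` its derivative and `a_c`
the unique positive root of `Q′`: if `Q(a_c) < 0` then
`2 a^{k+1} − τ a^k + τ a − 2 = 0` has exactly three positive roots; if
`Q(a_c) = 0`, exactly two; if `Q(a_c) > 0`, its only positive root is `a = 1`. -/
theorem stmt16 (k : ℕ) (hk : 2 ≤ k) (τ : ℝ) (hτ : 2 < τ)
    (hτne : τ ≠ 2 + 4 / ((k : ℝ) - 1)) (Q Q' : ℝ → ℝ)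
    (hQ : ∀ a : ℝ, Q a = 2 * a ^ k + (2 - τ) * (∑ j ∈ Finset.Icc 1 (k - 1), a ^ j) + 2)
    (hQ' : ∀ a : ℝ, HasDerivAt Q (Q' a) a)
    (ac : ℝ) (hac : 0 < ac) (hroot : Q' ac = 0)
    (huniq : ∀ x : ℝ, 0 < x → Q' x = 0 → x = ac) :
    (Q ac < 0 →
      {a : ℝ | 0 < a ∧ 2 * a ^ (k + 1) - τ * a ^ k + τ * a - 2 = 0}.encard = 3) ∧
    (Q ac = 0 →
      {a : ℝ | 0 < a ∧ 2 * a ^ (k + 1) - τ * a ^ k + τ * a - 2 = 0}.encard = 2) ∧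
    (0 < Q ac →
      {a : ℝ | 0 < a ∧ 2 * a ^ (k + 1) - τ * a ^ k + τ * a - 2 = 0} = {1}) := by
  have hk0 : k ≠ 0 := by lia
  obtain rfl : Q = diagonalCofactor k τ := by
    ext a
    rw [hQ, diagonalCofactor, Finset.Icc_sub_one_right_eq_Ico_of_not_isMin (by simpa using hk0)]
  have hslope : Q' 0 < 0 := by
    rw [(hQ' 0).unique (hasDerivAt_diagonalCofactor_zero hk)]
    exact sub_neg.2 hτ
  have htop := tendsto_diagonalCofactor_atTop (τ := τ) hk0
  have hvalley : IsValley (diagonalCofactor k τ) 0 ac :=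
    .of_hasDerivWithinAt (fun x _ ↦ (hQ' x).hasDerivWithinAt) hac.le hslope huniq htop
  have hone : (1 : ℝ) ∉ {a | 0 < a ∧ diagonalCofactor k τ a = 0} :=
    fun h ↦ hτne ((diagonalCofactor_one_eq_zero_iff hk).1 h.2)
  rw [setOf_diagonal_equation_eq_insert hk0, encard_insert_of_notMem hone]
  refine ⟨fun hneg ↦ ?_, fun hzero ↦ ?_, fun hpos ↦ ?_⟩
  · have hcont : Continuous (diagonalCofactor k τ) :=
      continuous_iff_continuousAt.2 fun a ↦ (hQ' a).continuousAt
    have hright := ((eventually_ge_atTop ac).and (htop.eventually_gt_atTop 0)).exists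
    rw [hvalley.encard_levelSet_eq_two hcont.continuousOn hac.le hneg
      (diagonalCofactor_zero hk0 ▸ two_pos) hright, two_add_one_eq_three]
  · rw [hvalley.levelSet_eq_singleton hac hzero, encard_singleton, one_add_one_eq_two]
  · rw [hvalley.levelSet_eq_empty hpos, insert_empty_eq]
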